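/- arXiv:1601.07736 — 5 statements merged into one kernel-verified Lean document; each statement's English description precedes it below -/
import Mathlib

section
/- Let S be an n×n row-stochastic matrix (n ≥ 1), written in block form with (1,1)-entry s₁₁, first row (after the first entry) xᵀ = [s₁₂, s₁₃, …, s₁ₙ], first column (after the first entry) y, and lower-right (n−1)×(n−1) block S(1|1). Let P be the n×n matrix whose first column is the all-ones vector e and whose j-th column (j ≥ 2) is the standard basis vector eⱼ. Then P is invertible and P⁻¹SP equals the block upper-triangular matrix with (1,1)-block equal to 1, (1,2)-block equal to xᵀ, (2,1)-block equal to the zero vector of length n−1, and (2,2)-block equal to B = S(1|1) − j_{n−1} xᵀ, where j_{n−1} is the (n−1)×1 all-ones column vector. In particular, S is similar to this block matrix. -/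
/-- For an `(n+1)×(n+1)` row-stochastic matrix `S`, writing `P` for the
matrix whose first column is the all-ones vector and whose remaining columns are the
standard basis vectors, `P` is invertible and `P⁻¹ * S * P` is the block
upper-triangular matrix with `(1,1)`-block `1`, `(1,2)`-block the first row of `S`
(without its first entry), `(2,1)`-block zero, and `(2,2)`-block
`S(1|1) - j_{n} xᵀ` (entrywise: `S i j - S 0 j`). In particular `S` is similar
to this block matrix. -/
theorem stochastic_block_triangularization (n : ℕ)
    (S : Matrix (Fin (n + 1)) (Fin (n + 1)) ℝ)
    (hnonneg : ∀ i j, 0 ≤ S i j)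
    (hrow : ∀ i, ∑ j, S i j = 1)
    (P : Matrix (Fin (n + 1)) (Fin (n + 1)) ℝ)
    (hP : ∀ i j, P i j = if j = 0 then 1 else if i = j then 1 else 0)
    (T : Matrix (Fin (n + 1)) (Fin (n + 1)) ℝ)
    (hT : ∀ i j, T i j =
      if i = 0 then (if j = 0 then 1 else S 0 j)
      else (if j = 0 then 0 else S i j - S 0 j)) :
    IsUnit P ∧ P⁻¹ * S * P = T := by
  have hdet : P.det = 1 := by
    rw [Matrix.det_of_lowerTriangular P]
    · apply Finset.prod_eq_one
      intro i _
      simp [hP]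
    · intro i j hij
      have hij' : i < j := hij
      have h0 : j ≠ 0 := Fin.ne_zero_of_lt hij'
      simp [hP, h0, hij'.ne]
  have hu : IsUnit P.det := by simp [hdet]
  have hSP : S * P = P * T := by
    ext i j
    have h1 : (S * P) i j = if j = 0 then 1 else S i j := by
      rw [Matrix.mul_apply]
      by_cases hj : j = 0
      · simp [hP, hj, hrow]
      · simp [hP, hj]
    rw [h1, Matrix.mul_apply, Fin.sum_univ_succ]
    refine Fin.cases ?_ (fun k => ?_) i
    · by_cases hj : j = 0
      · simp [hP, hT, hj]
      · simp [hP, hT, hj, (Fin.succ_ne_zero _).symm]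
    · by_cases hj : j = 0
      · simp [hP, hT, hj]
      · simp [hP, hT, hj]
  refine ⟨(Matrix.isUnit_iff_isUnit_det P).2 hu, ?_⟩
  rw [Matrix.mul_assoc, hSP, ← Matrix.mul_assoc, Matrix.nonsing_inv_mul P hu, Matrix.one_mul]
end

section
/- Let S = [s_{ij}] be an n×n row-stochastic matrix. Fix k ∈ {1, 2, …, n} and define the (n−1)×(n−1) matrix S(k) = S(k|k) − j_{n−1} s(k)ᵀ, where s(k)ᵀ = [s_{k1}, …, s_{k,k−1}, s_{k,k+1}, …, s_{kn}] is the k-th row of S with its k-th entry deleted. Then every eigenvalue of S other than 1 is an eigenvalue of S(k). -/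
/-- Let `S` be an `(n+1)×(n+1)` row-stochastic matrix and fix an index `k`.
Define the `n×n` matrix `S(k) = S(k|k) - j_n s(k)ᵀ`, i.e. entrywise
`Sk a b = S (k.succAbove a) (k.succAbove b) - S k (k.succAbove b)`, where
`S(k|k)` is the principal submatrix deleting row and column `k` and `s(k)ᵀ` is the
`k`-th row of `S` with its `k`-th entry deleted. Then every complex eigenvalue of `S`
other than `1` is an eigenvalue of `S(k)`. -/
theorem eigenvalue_of_deleted_matrix (n : ℕ)
    (S : Matrix (Fin (n + 1)) (Fin (n + 1)) ℝ)
    (hnonneg : ∀ i j, 0 ≤ S i j)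
    (hrow : ∀ i, ∑ j, S i j = 1)
    (k : Fin (n + 1))
    (Sk : Matrix (Fin n) (Fin n) ℝ)
    (hSk : ∀ a b, Sk a b = S (k.succAbove a) (k.succAbove b) - S k (k.succAbove b))
    (μ : ℂ) (hμ : μ ≠ 1)
    (hev : ∃ v : Fin (n + 1) → ℂ, v ≠ 0 ∧
      (S.map (fun x => (x : ℂ))).mulVec v = μ • v) :
    ∃ w : Fin n → ℂ, w ≠ 0 ∧ (Sk.map (fun x => (x : ℂ))).mulVec w = μ • w := by
  obtain ⟨v, hv, he⟩ := hev
  have h1 : ∀ i, ∑ j, (S i j : ℂ) * v j = μ * v i := by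
    intro i
    have := congrFun he i
    simpa [Matrix.mulVec, dotProduct] using this
  have h2 : ∀ i, ∑ j, (S i j : ℂ) = 1 := by
    intro i
    exact_mod_cast hrow i
  refine ⟨fun a => v (k.succAbove a) - v k, ?_, ?_⟩
  · intro h0
    have hc : ∀ j, v j = v k := by
      intro j
      rcases Fin.eq_self_or_eq_succAbove k j with h | ⟨a, rfl⟩
      · rw [h]
      · exact sub_eq_zero.mp (congrFun h0 a)
    have h3 := h1 k
    simp_rw [hc] at h3
    rw [← Finset.sum_mul, h2] at h3
    have h4 : (μ - 1) * v k = 0 := by linear_combination -h3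
    rcases mul_eq_zero.mp h4 with h | h
    · exact hμ (sub_eq_zero.mp h)
    · exact hv (funext fun j => (hc j).trans h)
  · funext a
    have h5 : ∑ j, ((S (k.succAbove a) j : ℂ) - S k j) * (v j - v k)
        = μ * (v (k.succAbove a) - v k) := by
      have e : ∀ j, ((S (k.succAbove a) j : ℂ) - S k j) * (v j - v k)
        = (S (k.succAbove a) j : ℂ) * v j - S k j * v j
          - ((S (k.succAbove a) j : ℂ) * v k - S k j * v k) := fun j => by ring
      simp_rw [e, Finset.sum_sub_distrib, ← Finset.sum_mul, h1, h2]
      ring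
    rw [Fin.sum_univ_succAbove _ k] at h5
    simpa [Matrix.mulVec, dotProduct, hSk] using h5
end

section
/- Let Γ be a simple undirected connected graph on n ≥ 2 vertices with Randić transition matrix 𝓡 = D⁻¹A. Then every real eigenvalue λ of 𝓡 satisfies λ ≥ −1 + min_{i∼j} N(i,j)/max{d_i, d_j}, where the minimum is taken over all pairs of adjacent vertices i, j. (Equivalently, if ρ_n denotes the eigenvalue of largest modulus among the negative Randić eigenvalues of Γ, then |ρ_n| ≤ 1 − min_{i∼j} N(i,j)/max{d_i, d_j}.) -/
theorem randic_aux (n : ℕ)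
    (G : SimpleGraph (Fin n)) [DecidableRel G.Adj]
    (hdeg : ∀ i, 0 < G.degree i) (lam : ℝ) (hl : lam < 0) (v : Fin n → ℝ)
    (hv : ∀ i, ∑ k ∈ G.neighborFinset i, v k = G.degree i * (lam * v i))
    (x : Fin n) (hx : 0 < v x) :
    ∃ i j, G.Adj i j ∧ ((G.neighborFinset i ∩ G.neighborFinset j).card : ℝ) /
        max (G.degree i : ℝ) (G.degree j : ℝ) ≤ 1 + lam := by
  obtain ⟨i, -, hi⟩ := Finset.exists_max_image Finset.univ v ⟨x, Finset.mem_univ x⟩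
  have hne : (G.neighborFinset i).Nonempty := by
    rw [← Finset.card_pos]; exact hdeg i
  obtain ⟨j, hj, hjm⟩ := Finset.exists_min_image (G.neighborFinset i) v hne
  have hvi : 0 < v i := lt_of_lt_of_le hx (hi x (Finset.mem_univ x))
  have hdi : (0 : ℝ) < G.degree i := by exact_mod_cast hdeg i
  have hdj : (0 : ℝ) < G.degree j := by exact_mod_cast hdeg j
  refine ⟨i, j, by simpa using hj, ?_⟩
  set C := G.neighborFinset i ∩ G.neighborFinset j with hC
  set M := max (G.degree i : ℝ) (G.degree j : ℝ) with hM
  have hM0 : 0 < M := lt_of_lt_of_le hdi (le_max_left _ _)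
  have h1 : ∑ k ∈ C, (v k - v j) ≤ G.degree i * (lam * v i - v j) := by
    calc ∑ k ∈ C, (v k - v j) ≤ ∑ k ∈ G.neighborFinset i, (v k - v j) :=
          Finset.sum_le_sum_of_subset_of_nonneg Finset.inter_subset_left
            (fun k hk _ => sub_nonneg.2 (hjm k hk))
      _ = G.degree i * (lam * v i - v j) := by
          rw [Finset.sum_sub_distrib, hv]; simp; ring
  have h2 : ∑ k ∈ C, (v i - v k) ≤ G.degree j * (v i - lam * v j) := by
    calc ∑ k ∈ C, (v i - v k) ≤ ∑ k ∈ G.neighborFinset j, (v i - v k) :=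
          Finset.sum_le_sum_of_subset_of_nonneg Finset.inter_subset_right
            (fun k _ _ => sub_nonneg.2 (hi k (Finset.mem_univ k)))
      _ = G.degree j * (v i - lam * v j) := by
          rw [Finset.sum_sub_distrib, hv]; simp; ring
  have p1 : 0 ≤ ∑ k ∈ C, (v k - v j) := Finset.sum_nonneg
    (fun k hk => sub_nonneg.2 (hjm k (Finset.mem_inter.1 hk).1))
  have p2 : 0 ≤ ∑ k ∈ C, (v i - v k) := Finset.sum_nonneg
    (fun k _ => sub_nonneg.2 (hi k (Finset.mem_univ k)))
  have q1 : 0 ≤ lam * v i - v j := nonneg_of_mul_nonneg_right (p1.trans h1) hdi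
  have q2 : 0 ≤ v i - lam * v j := nonneg_of_mul_nonneg_right (p2.trans h2) hdj
  have r1 := h1.trans (mul_le_mul_of_nonneg_right (le_max_left (G.degree i : ℝ) (G.degree j)) q1)
  have r2 := h2.trans (mul_le_mul_of_nonneg_right (le_max_right (G.degree i : ℝ) (G.degree j)) q2)
  have hs : ∑ k ∈ C, (v k - v j) + ∑ k ∈ C, (v i - v k) = C.card * (v i - v j) := by
    rw [← Finset.sum_add_distrib, ← nsmul_eq_mul, ← Finset.sum_const]
    exact Finset.sum_congr rfl (fun k _ => by ring)
  have hlt : 0 < v i - v j := by nlinarith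
  rw [div_le_iff₀ hM0]
  refine le_of_mul_le_mul_right ?_ hlt
  rw [← hM] at r1 r2
  nlinarith

/-- Rojo–Soto bound: For a simple connected graph `Γ` on `n ≥ 2` vertices
with Randić transition matrix `𝓡 = D⁻¹A` (entries `1/d_i` if `i ∼ j`, else `0`),
every real eigenvalue `λ` of `𝓡` satisfies
`λ ≥ -1 + min_{i∼j} N(i,j)/max{d_i, d_j}`, the minimum being over adjacent pairs. -/
theorem randic_rojo_soto_bound (n : ℕ) (hn : 2 ≤ n)
    (G : SimpleGraph (Fin n)) [DecidableRel G.Adj]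
    (hconn : G.Connected)
    (R : Matrix (Fin n) (Fin n) ℝ)
    (hR : ∀ i j, R i j = if G.Adj i j then 1 / (G.degree i : ℝ) else 0)
    (lam : ℝ)
    (hev : ∃ v : Fin n → ℝ, v ≠ 0 ∧ R.mulVec v = lam • v) :
    lam ≥ -1 + ⨅ p : {p : Fin n × Fin n // G.Adj p.1 p.2},
      ((G.neighborFinset p.1.1 ∩ G.neighborFinset p.1.2).card : ℝ) /
        max (G.degree p.1.1 : ℝ) (G.degree p.1.2 : ℝ) := by
  have : Nontrivial (Fin n) := Fin.nontrivial_iff_two_le.2 hn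
  have hdeg : ∀ i, 0 < G.degree i := fun i => hconn.preconnected.degree_pos_of_nontrivial i
  suffices h : ∃ i j, G.Adj i j ∧ ((G.neighborFinset i ∩ G.neighborFinset j).card : ℝ) /
        max (G.degree i : ℝ) (G.degree j : ℝ) ≤ 1 + lam by
    obtain ⟨i, j, hij, h⟩ := h
    have := ciInf_le (f := fun p : {p : Fin n × Fin n // G.Adj p.1 p.2} =>
      ((G.neighborFinset p.1.1 ∩ G.neighborFinset p.1.2).card : ℝ) /
        max (G.degree p.1.1 : ℝ) (G.degree p.1.2 : ℝ)) (Set.finite_range _).bddBelow ⟨(i, j), hij⟩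
    have := this.trans h
    linarith
  obtain ⟨v, hv0, hv⟩ := hev
  have hv' : ∀ i, ∑ k ∈ G.neighborFinset i, v k = G.degree i * (lam * v i) := by
    intro i
    have hdi : (G.degree i : ℝ) ≠ 0 := by exact_mod_cast (hdeg i).ne'
    have h := congrFun hv i
    simp only [Matrix.mulVec, dotProduct, hR, Pi.smul_apply, smul_eq_mul] at h
    rw [← h, Finset.mul_sum, SimpleGraph.neighborFinset_eq_filter, Finset.sum_filter]
    refine Finset.sum_congr rfl (fun k _ => ?_)
    split_ifs
    · field_simp
    · simp
  obtain ⟨x, hx⟩ := Function.ne_iff.1 hv0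
  rcases lt_or_ge lam 0 with hl | hl
  · rcases lt_or_gt_of_ne hx with hx | hx
    · exact randic_aux n G hdeg lam hl (-v) (fun i => by simp [hv']) x (by simpa using hx)
    · exact randic_aux n G hdeg lam hl v hv' x hx
  · obtain ⟨y, hy⟩ := Finset.card_pos.1 (hdeg x)
    refine ⟨x, y, by simpa using hy, ?_⟩
    have hdx : (0 : ℝ) < G.degree x := by exact_mod_cast hdeg x
    have : ((G.neighborFinset x ∩ G.neighborFinset y).card : ℝ) ≤ G.degree x := by
      exact_mod_cast Finset.card_le_card Finset.inter_subset_left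
    have h1 : ((G.neighborFinset x ∩ G.neighborFinset y).card : ℝ) /
        max (G.degree x : ℝ) (G.degree y : ℝ) ≤ 1 :=
      div_le_one_of_le₀ (this.trans (le_max_left _ _)) (hdx.le.trans (le_max_left _ _))
    linarith
end

section
/- Let Γ be a simple connected graph of order n ≥ 2, and let λ₁ = 1 ≥ λ₂ ≥ … ≥ λₙ be the eigenvalues of its Randić transition matrix 𝓡 = D⁻¹A. For vertices i ≠ k define α_{ik} = 1/d_k + 2N(i,k)/max{d_i, d_k} if k ∼ i, and α_{ik} = 2N(i,k)/max{d_i, d_k} if k ≁ i; and define β_{ik} = 1/d_k + 2/d_i + 2N(i,k)/max{d_i, d_k} if k ∼ i, and β_{ik} = 2N(i,k)/max{d_i, d_k} if k ≁ i. Then −2 + max_i { min{ min_{k ≠ i} α_{ik}, 1 } } ≤ λₙ and λ₂ ≤ 2 − max_i { min{ min_{k ≠ i} β_{ik}, 1 } }, i.e., every eigenvalue λ ≠ 1 of 𝓡 satisfies −2 + max_{i}{min_{k≠i}{α_{ik}},1} ≤ λ ≤ 2 − max_{i}{min_{k≠i}{β_{ik}},1}. -/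
theorem randic_core {n : ℕ} (G : SimpleGraph (Fin n)) [DecidableRel G.Adj]
    (R : Matrix (Fin n) (Fin n) ℝ)
    (hR : ∀ i j, R i j = if G.Adj i j then 1 / (G.degree i : ℝ) else 0)
    (hdeg : ∀ i, (0 : ℝ) < (G.degree i : ℝ))
    (lam : ℝ) (hlam : lam ≠ 1) (v : Fin n → ℝ) (hv0 : v ≠ 0) (hv : R.mulVec v = lam • v)
    (i : Fin n) : ∃ k, k ≠ i ∧ |lam + R i k| ≤
      2 - 2 * ((G.neighborFinset i ∩ G.neighborFinset k).card : ℝ) /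
          max (G.degree i : ℝ) (G.degree k : ℝ) - R k i - R i k := by
  have hv' : ∀ k, ∑ j, R k j * v j = lam * v k := fun k => by
    have := congrFun hv k
    simpa [Matrix.mulVec, dotProduct] using this
  have hrow : ∀ k, ∑ j, R k j = 1 := fun k => by
    simp only [hR]
    rw [← Finset.sum_filter, Finset.sum_const, ← SimpleGraph.neighborFinset_eq_filter,
      SimpleGraph.card_neighborFinset_eq_degree, nsmul_eq_mul]
    have := (hdeg k).ne'
    field_simp
  have hpos : ∀ k j, 0 ≤ R k j := fun k j => by
    rw [hR]; split_ifs
    · exact one_div_nonneg.mpr (hdeg k).le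
    · exact le_rfl
  have hdiag : ∀ k, R k k = 0 := fun k => by simp [hR]
  obtain ⟨k, -, hk⟩ := Finset.exists_max_image Finset.univ (fun j => |v j - v i|) ⟨i, Finset.mem_univ _⟩
  have hwk : 0 < |v k - v i| := by
    by_contra hcon
    have hall : ∀ j, v j = v i := fun j => by
      have h1 := hk j (Finset.mem_univ _)
      have : |v j - v i| = 0 := le_antisymm (by linarith) (abs_nonneg _)
      linarith [abs_eq_zero.mp this]
    have h2 := hv' i
    simp only [hall] at h2
    rw [← Finset.sum_mul, hrow] at h2
    have h3 : (lam - 1) * v i = 0 := by linarith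
    rcases mul_eq_zero.mp h3 with h | h
    · exact hlam (by linarith)
    · exact hv0 (funext fun j => by rw [hall j, h]; rfl)
  have hki : k ≠ i := by
    rintro rfl
    simp at hwk
  refine ⟨k, hki, ?_⟩
  have hmin : ∑ j, min (R k j) (R i j) = ((G.neighborFinset i ∩ G.neighborFinset k).card : ℝ) /
          max (G.degree i : ℝ) (G.degree k : ℝ) := by
    have hm : ∀ j, min (R k j) (R i j) = if j ∈ G.neighborFinset i ∩ G.neighborFinset k then
        1 / max (G.degree i : ℝ) (G.degree k : ℝ) else 0 := fun j => by
      simp only [Finset.mem_inter, SimpleGraph.mem_neighborFinset]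
      by_cases h1 : G.Adj i j <;> by_cases h2 : G.Adj k j
      · simp only [hR, h1, h2, if_true, and_self]
        rcases le_total (G.degree i : ℝ) (G.degree k : ℝ) with h | h
        · rw [max_eq_right h, min_eq_left (one_div_le_one_div_of_le (hdeg i) h)]
        · rw [max_eq_left h, min_eq_right (one_div_le_one_div_of_le (hdeg k) h)]
      · have := hpos i j
        have e : R k j = 0 := by simp [hR, h2]
        simp [e, h2, this]
      · have := hpos k j
        have e : R i j = 0 := by simp [hR, h1]
        simp [e, h1, this]
      · simp [hR, h1, h2]
    simp only [hm]
    rw [Finset.sum_ite_mem, Finset.univ_inter, Finset.sum_const, nsmul_eq_mul]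
    ring
  have hid : (lam + R i k) * (v k - v i) =
      ∑ j, ((R k j - R i j) * (v j - v i) + if j = k then R i k * (v k - v i) else 0) := by
    rw [Finset.sum_add_distrib, Finset.sum_ite_eq' Finset.univ k]
    simp only [Finset.mem_univ, if_true]
    have : ∑ j, (R k j - R i j) * (v j - v i) = ∑ j, R k j * v j - ∑ j, R i j * v j
        - (∑ j, R k j - ∑ j, R i j) * v i := by
      rw [sub_mul, Finset.sum_mul, Finset.sum_mul, ← Finset.sum_sub_distrib,
        ← Finset.sum_sub_distrib, ← Finset.sum_sub_distrib]
      exact Finset.sum_congr rfl fun j _ => by ring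
    rw [this, hv', hv', hrow, hrow]
    ring
  have hbound : |(lam + R i k) * (v k - v i)| ≤
      ∑ j, ((R k j + R i j - 2 * min (R k j) (R i j)) - (if j = i then R k i else 0)
        - (if j = k then R i k else 0)) * |v k - v i| := by
    rw [hid]
    refine (Finset.abs_sum_le_sum_abs _ _).trans (Finset.sum_le_sum fun j _ => ?_)
    by_cases hji : j = i
    · subst hji
      simp [hki.symm, hdiag, hpos]
    · by_cases hjk : j = k
      · subst hjk
        simp [hji, hdiag, hpos]
      · simp only [hji, hjk, if_false, add_zero, sub_zero]
        rw [abs_mul]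
        have e : |R k j - R i j| = R k j + R i j - 2 * min (R k j) (R i j) := by
          rcases le_total (R k j) (R i j) with h | h
          · rw [min_eq_left h, abs_of_nonpos (by linarith)]; ring
          · rw [min_eq_right h, abs_of_nonneg (by linarith)]; ring
        rw [← e]
        exact mul_le_mul_of_nonneg_left (hk j (Finset.mem_univ _)) (abs_nonneg _)
  rw [← Finset.sum_mul, abs_mul] at hbound
  have hb := le_of_mul_le_mul_right hbound hwk
  simp only [Finset.sum_sub_distrib, Finset.sum_add_distrib, ← Finset.mul_sum, hrow, hmin,
    Finset.sum_ite_eq', Finset.mem_univ, if_true] at hb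
  rw [mul_div_assoc]
  linarith

/-- For a simple connected graph `Γ` of order `n ≥ 2` with Randić
transition matrix `𝓡 = D⁻¹A`, every eigenvalue `λ ≠ 1` of `𝓡` satisfies
`-2 + max_i min{min_{k≠i} α_{ik}, 1} ≤ λ ≤ 2 - max_i min{min_{k≠i} β_{ik}, 1}`,
where `α_{ik} = (1/d_k if k ∼ i else 0) + 2N(i,k)/max{d_i,d_k}` and
`β_{ik} = (1/d_k + 2/d_i if k ∼ i else 0) + 2N(i,k)/max{d_i,d_k}`. -/
theorem randic_eigenvalue_bounds (n : ℕ) (hn : 2 ≤ n)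
    (G : SimpleGraph (Fin n)) [DecidableRel G.Adj]
    (hconn : G.Connected)
    (R : Matrix (Fin n) (Fin n) ℝ)
    (hR : ∀ i j, R i j = if G.Adj i j then 1 / (G.degree i : ℝ) else 0)
    (α β : Fin n → Fin n → ℝ)
    (hα : ∀ i k, k ≠ i → α i k =
      (if G.Adj i k then 1 / (G.degree k : ℝ) else 0) +
        2 * ((G.neighborFinset i ∩ G.neighborFinset k).card : ℝ) /
          max (G.degree i : ℝ) (G.degree k : ℝ))
    (hβ : ∀ i k, k ≠ i → β i k =
      (if G.Adj i k then 1 / (G.degree k : ℝ) + 2 / (G.degree i : ℝ) else 0) +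
        2 * ((G.neighborFinset i ∩ G.neighborFinset k).card : ℝ) /
          max (G.degree i : ℝ) (G.degree k : ℝ))
    (lam : ℝ) (hlam : lam ≠ 1)
    (hev : ∃ v : Fin n → ℝ, v ≠ 0 ∧ R.mulVec v = lam • v) :
    -2 + (⨆ i : Fin n, min (⨅ k : {k : Fin n // k ≠ i}, α i k) 1) ≤ lam ∧
      lam ≤ 2 - (⨆ i : Fin n, min (⨅ k : {k : Fin n // k ≠ i}, β i k) 1) := by
  classical
  obtain ⟨v, hv0, hv⟩ := hev
  haveI : Nontrivial (Fin n) := Fin.nontrivial_iff_two_le.mpr hn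
  have hdeg : ∀ i, (0 : ℝ) < (G.degree i : ℝ) := fun i => by
    exact_mod_cast hconn.preconnected.degree_pos_of_nontrivial i
  have key : ∀ i, ∃ k, k ≠ i ∧ -2 + α i k ≤ lam ∧ lam ≤ 2 - β i k := by
    intro i
    obtain ⟨k, hki, h⟩ := randic_core G R hR hdeg lam hlam v hv0 hv i
    refine ⟨k, hki, ?_⟩
    rw [hα i k hki, hβ i k hki]
    have h2 := abs_le.mp h
    rw [hR i k, hR k i] at h2
    by_cases hik : G.Adj i k
    · simp only [hik, hik.symm, if_true] at h2 ⊢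
      have e : 2 / (G.degree i : ℝ) = 2 * (1 / (G.degree i : ℝ)) := by ring
      rw [e]
      constructor <;> linarith [h2.1, h2.2]
    · have hki' : ¬ G.Adj k i := fun h => hik h.symm
      simp only [hik, hki', if_false] at h2 ⊢
      constructor <;> linarith [h2.1, h2.2]
  haveI : Nonempty (Fin n) := ⟨⟨0, by omega⟩⟩
  have A : (⨆ i : Fin n, min (⨅ k : {k : Fin n // k ≠ i}, α i k) 1) ≤ lam + 2 := by
    refine ciSup_le fun i => ?_
    obtain ⟨k, hki, h1, h2⟩ := key i
    have := ciInf_le (Set.finite_range (fun k : {k : Fin n // k ≠ i} => α i k)).bddBelow ⟨k, hki⟩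
    refine (min_le_left _ _).trans (this.trans ?_)
    simp only
    linarith
  have B : (⨆ i : Fin n, min (⨅ k : {k : Fin n // k ≠ i}, β i k) 1) ≤ 2 - lam := by
    refine ciSup_le fun i => ?_
    obtain ⟨k, hki, h1, h2⟩ := key i
    have := ciInf_le (Set.finite_range (fun k : {k : Fin n // k ≠ i} => β i k)).bddBelow ⟨k, hki⟩
    refine (min_le_left _ _).trans (this.trans ?_)
    simp only
    linarith
  constructor <;> linarith
end

section
/- Let Γ be a simple connected graph on n ≥ 2 vertices with Randić transition matrix 𝓡 = D⁻¹A, and let λ be any real eigenvalue of 𝓡 with λ ≠ 1. Then for EVERY vertex i of Γ, λ satisfies −2 + min_{k ≠ i} α_{ik} ≤ λ ≤ 2 − min_{k ≠ i} β_{ik}, where for k ≠ i: α_{ik} = 1/d_k + 2N(i,k)/max{d_i, d_k} if k ∼ i and α_{ik} = 2N(i,k)/max{d_i, d_k} if k ≁ i; β_{ik} = 1/d_k + 2/d_i + 2N(i,k)/max{d_i, d_k} if k ∼ i and β_{ik} = 2N(i,k)/max{d_i, d_k} if k ≁ i. -/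
/-- For a simple connected graph `Γ` on `n ≥ 2` vertices with Randić
transition matrix `𝓡 = D⁻¹A`, every real eigenvalue `λ ≠ 1` of `𝓡` satisfies, for
EVERY vertex `i`, `-2 + min_{k≠i} α_{ik} ≤ λ ≤ 2 - min_{k≠i} β_{ik}`, where
`α_{ik} = (1/d_k if k ∼ i else 0) + 2N(i,k)/max{d_i,d_k}` and
`β_{ik} = (1/d_k + 2/d_i if k ∼ i else 0) + 2N(i,k)/max{d_i,d_k}`. -/
theorem randic_eigenvalue_bounds_each_vertex (n : ℕ) (hn : 2 ≤ n)
    (G : SimpleGraph (Fin n)) [DecidableRel G.Adj]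
    (hconn : G.Connected)
    (R : Matrix (Fin n) (Fin n) ℝ)
    (hR : ∀ i j, R i j = if G.Adj i j then 1 / (G.degree i : ℝ) else 0)
    (α β : Fin n → Fin n → ℝ)
    (hα : ∀ i k, k ≠ i → α i k =
      (if G.Adj i k then 1 / (G.degree k : ℝ) else 0) +
        2 * ((G.neighborFinset i ∩ G.neighborFinset k).card : ℝ) /
          max (G.degree i : ℝ) (G.degree k : ℝ))
    (hβ : ∀ i k, k ≠ i → β i k =
      (if G.Adj i k then 1 / (G.degree k : ℝ) + 2 / (G.degree i : ℝ) else 0) +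
        2 * ((G.neighborFinset i ∩ G.neighborFinset k).card : ℝ) /
          max (G.degree i : ℝ) (G.degree k : ℝ))
    (lam : ℝ) (hlam : lam ≠ 1)
    (hev : ∃ v : Fin n → ℝ, v ≠ 0 ∧ R.mulVec v = lam • v) :
    ∀ i : Fin n,
      -2 + (⨅ k : {k : Fin n // k ≠ i}, α i k) ≤ lam ∧
        lam ≤ 2 - (⨅ k : {k : Fin n // k ≠ i}, β i k) := by
  intro i
  obtain ⟨v, hv0, hv⟩ := hev
  have : Nontrivial (Fin n) := Fin.nontrivial_iff_two_le.2 hn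
  have hdeg : ∀ j, 0 < (G.degree j : ℝ) := fun j => by
    exact_mod_cast hconn.preconnected.degree_pos_of_nontrivial j
  have hrow : ∀ k, ∑ j, R k j = 1 := by
    intro k
    simp only [hR]
    rw [← Finset.sum_filter, Finset.sum_const, ← SimpleGraph.neighborFinset_eq_filter,
      SimpleGraph.card_neighborFinset_eq_degree, nsmul_eq_mul, mul_one_div,
      div_self (hdeg k).ne']
  have hmin : ∀ k, ∑ j, min (R k j) (R i j) =
      ((G.neighborFinset i ∩ G.neighborFinset k).card : ℝ) /
        max (G.degree i : ℝ) (G.degree k : ℝ) := by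
    intro k
    have h1 : ∀ j, min (R k j) (R i j) =
        if j ∈ G.neighborFinset i ∩ G.neighborFinset k then
          1 / max (G.degree i : ℝ) (G.degree k : ℝ) else 0 := by
      intro j
      have hk := hdeg k
      have hi := hdeg i
      have a1 : (0:ℝ) ≤ 1 / (G.degree k : ℝ) := by positivity
      have a2 : (0:ℝ) ≤ 1 / (G.degree i : ℝ) := by positivity
      rw [hR, hR]
      simp only [Finset.mem_inter, SimpleGraph.mem_neighborFinset]
      by_cases hA : G.Adj k j <;> by_cases hB : G.Adj i j <;>
        simp only [hA, hB, if_true, if_false, and_true, and_false, min_self, min_eq_left a1, min_eq_right a1, min_eq_left a2, min_eq_right a2]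
      rcases le_total (G.degree i : ℝ) (G.degree k : ℝ) with h | h
      · rw [max_eq_right h, min_eq_left (one_div_le_one_div_of_le hi h)]
      · rw [max_eq_left h, min_eq_right (one_div_le_one_div_of_le hk h)]
    rw [Finset.sum_congr rfl (fun j _ => h1 j), ← Finset.sum_filter, Finset.sum_const,
      Finset.filter_univ_mem, nsmul_eq_mul, mul_one_div]
  have habs : ∀ k, ∑ j, |R k j - R i j| = 2 - 2 *
      (((G.neighborFinset i ∩ G.neighborFinset k).card : ℝ) /
        max (G.degree i : ℝ) (G.degree k : ℝ)) := by
    intro k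
    have h3 : ∀ j, |R k j - R i j| = R k j + R i j - 2 * min (R k j) (R i j) := by
      intro j
      rcases le_total (R k j) (R i j) with h | h
      · rw [min_eq_left h, abs_of_nonpos (by linarith)]; ring
      · rw [min_eq_right h, abs_of_nonneg (by linarith)]; ring
    rw [Finset.sum_congr rfl (fun j _ => h3 j), Finset.sum_sub_distrib,
      Finset.sum_add_distrib, ← Finset.mul_sum, hrow, hrow, hmin]
    norm_num
  have hvk : ∀ k, ∑ j, R k j * v j = lam * v k := by
    intro k
    have := congrFun hv k
    simpa [Matrix.mulVec, dotProduct] using this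
  obtain ⟨w, hw⟩ : ∃ w : Fin n → ℝ, ∀ k, w k = v k - v i := ⟨_, fun _ => rfl⟩
  have hweq : ∀ k, ∑ j, (R k j - R i j) * w j = lam * w k := by
    intro k
    have : ∀ j, (R k j - R i j) * w j =
        R k j * v j - R i j * v j - (R k j * v i - R i j * v i) := by
      intro j; rw [hw]; ring
    rw [Finset.sum_congr rfl (fun j _ => this j), Finset.sum_sub_distrib,
      Finset.sum_sub_distrib, Finset.sum_sub_distrib, ← Finset.sum_mul, ← Finset.sum_mul,
      hrow, hrow, hvk, hvk, hw]
    ring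
  have hwi : w i = 0 := by rw [hw]; ring
  have hw0 : ∃ k, w k ≠ 0 := by
    by_contra hc
    push Not at hc
    have hc' : ∀ k, v k = v i := fun k => by have := hc k; rw [hw] at this; linarith
    have h1 := hvk i
    rw [Finset.sum_congr rfl (fun j _ => by rw [hc' j]), ← Finset.sum_mul, hrow] at h1
    have h2 : (lam - 1) * v i = 0 := by linarith
    rcases mul_eq_zero.1 h2 with h | h
    · exact hlam (by linarith)
    · exact hv0 (funext fun k => by rw [hc' k, h]; rfl)
  obtain ⟨k, -, hk⟩ := Finset.exists_max_image Finset.univ (fun j => |w j|) ⟨i, Finset.mem_univ i⟩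
  have hkpos : 0 < |w k| := by
    obtain ⟨j, hj⟩ := hw0
    exact lt_of_lt_of_le (abs_pos.2 hj) (hk j (Finset.mem_univ j))
  have hki : k ≠ i := by
    rintro rfl
    rw [hwi] at hkpos; simp at hkpos
  have hsplit : ∀ f : Fin n → ℝ, ∑ j, f j = f i + f k + ∑ j ∈ (Finset.univ.erase i).erase k, f j := by
    intro f
    rw [← Finset.add_sum_erase Finset.univ f (Finset.mem_univ i),
      ← Finset.add_sum_erase (Finset.univ.erase i) f (by simp [hki] : k ∈ _)]
    ring
  have hdiag : ∀ j, R j j = 0 := fun j => by simp [hR]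
  have e1 := hweq k
  rw [hsplit, hwi, hdiag, hdiag] at e1
  have e2 := habs k
  rw [hsplit, hdiag, hdiag] at e2
  have hRnn : ∀ a b, 0 ≤ R a b := by
    intro a b; rw [hR]; split_ifs <;> positivity
  rw [sub_zero, zero_sub, abs_neg, abs_of_nonneg (hRnn _ _), abs_of_nonneg (hRnn _ _)] at e2
  set S := ∑ j ∈ (Finset.univ.erase i).erase k, |R k j - R i j| with hS
  have e3 : |(lam + R i k) * w k| ≤ S * |w k| := by
    have : (lam + R i k) * w k = ∑ j ∈ (Finset.univ.erase i).erase k, (R k j - R i j) * w j := by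
      linarith
    rw [this, hS, Finset.sum_mul]
    refine (Finset.abs_sum_le_sum_abs _ _).trans (Finset.sum_le_sum fun j _ => ?_)
    rw [abs_mul]
    exact mul_le_mul_of_nonneg_left (hk j (Finset.mem_univ j)) (abs_nonneg _)
  rw [abs_mul] at e3
  have e4 := abs_le.1 (le_of_mul_le_mul_right e3 hkpos)
  have hA : (⨅ k : {k : Fin n // k ≠ i}, α i k) ≤ α i k :=
    ciInf_le (f := fun k : {k : Fin n // k ≠ i} => α i k) (Set.finite_range _).bddBelow ⟨k, hki⟩
  have hB : (⨅ k : {k : Fin n // k ≠ i}, β i k) ≤ β i k :=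
    ciInf_le (f := fun k : {k : Fin n // k ≠ i} => β i k) (Set.finite_range _).bddBelow ⟨k, hki⟩
  rw [hα i k hki] at hA
  rw [hβ i k hki] at hB
  rw [mul_div_assoc] at hA hB
  have r1 := hR i k
  have r2 := hR k i
  simp only [G.adj_comm k i] at r2
  by_cases hadj : G.Adj i k
  · simp only [hadj, if_true] at r1 r2 hA hB
    have : 2 / (G.degree i : ℝ) = 2 * (1 / (G.degree i : ℝ)) := by ring
    rw [this] at hB
    constructor <;> linarith
  · simp only [hadj, if_false] at r1 r2 hA hB
    constructor <;> linarith
end
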